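/- (i) For every ε > 0 and every C ≥ 1, every locally finite metric space all of whose finite subsets admit C-bilipschitz embeddings into ℓ_1 admits a ((1+ε)·C)-bilipschitz embedding into ℓ_1; and (ii) there exists a locally finite metric space M whose finite subsets all admit isometric embeddings into ℓ_1 but which admits no isometric embedding into ℓ_1. -/

import Mathlib

open scoped ENNReal

/-- A metric space is locally finite if every closed ball of finite radius is finite. -/
def MetricLocallyFinite (A : Type*) [MetricSpace A] : Prop :=
  ∀ (x : A) (R : ℝ), (Metric.closedBall x R).Finite

/-- `f` is a `C`-bilipschitz embedding: there is `r > 0` with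
`r * d(u,v) ≤ d(f u, f v) ≤ r * C * d(u,v)` for all `u, v`. -/
def IsBilipschitzEmbedding {A Y : Type*} [MetricSpace A] [MetricSpace Y]
    (C : ℝ) (f : A → Y) : Prop :=
  ∃ r : ℝ, 0 < r ∧ ∀ u v : A,
    r * dist u v ≤ dist (f u) (f v) ∧ dist (f u) (f v) ≤ r * C * dist u v

/-!
For the embedding, fix a base point `O` and send `x` to the sequence `(φᵢ x • fᵢ x)ᵢ`, where `fᵢ`
embeds a large ball about `O` with `fᵢ O = 0` and `(φᵢ)` is a partition of unity by tents in the
height `δ log (1 + d(x, O))`. If `d(x, O) ≤ d(y, O)`, every `fᵢ` with `φᵢ y ≠ 0` embeds both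
points, so replacing `φᵢ x` by `φᵢ y` turns the distance between the images into a convex
combination of the distances between `fᵢ x` and `fᵢ y`; the cost is at most
`∑ᵢ |φᵢ x - φᵢ y| * ‖fᵢ x‖`, which is `O(δ) * d(x, y)` because the logarithm varies slowly.
Finally `ℓ¹(ℓ¹)` is `ℓ¹`.

For the counterexample, place `0`, `1` and a fair coin flip, at distance `1 / 2` from both and
independent of all other flips, at height `n` on the `n`-th of countably many spokes. Finitely many
flips embed in `ℓ¹` by listing their values over all outcomes. In `ℓ¹`, however, the base copies
`a`, `b` of `0`, `1` and those on the `n`-th spoke form a metric rectangle, which is degenerate in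
each coordinate, so the displacement from `0` to the flip on the `n`-th spoke is bounded by
`|b - a|` coordinatewise. Such vectors form a norm-compact set, yet these displacements are
`1 / 2`-separated.
-/

open scoped lp

section LpOne

variable {ι κ : Type*} {E : Type*} [NormedAddCommGroup E]
variable {F : ι → Type*} [∀ i, NormedAddCommGroup (F i)]

theorem memℓp_one_iff_summable_norm {f : ∀ i, F i} : Memℓp f 1 ↔ Summable fun i => ‖f i‖ := by
  simpa using memℓp_gen_iff (p := 1) (f := f) (by simp)

theorem lp_one_hasSum_norm (f : lp F 1) : HasSum (fun i => ‖f i‖) ‖f‖ := by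
  simpa using lp.hasSum_norm (p := 1) (by simp) f

theorem lp_one_hasSum_dist (f g : lp F 1) : HasSum (fun i => dist (f i) (g i)) (dist f g) := by
  simpa [dist_eq_norm] using lp_one_hasSum_norm (f - g)

theorem lp_one_dist_single_single [DecidableEq ι] {i j : ι} (h : i ≠ j) (x y : E) :
    dist (lp.single 1 i x : ℓ¹(ι, E)) (lp.single 1 j y) = ‖x‖ + ‖y‖ := by
  refine (lp_one_hasSum_dist _ _).unique ?_
  convert (hasSum_pi_single i ‖x‖).add (hasSum_pi_single j ‖y‖) using 2 with k
  rcases eq_or_ne k i with rfl | hki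
  · simp [h]
  · rcases eq_or_ne k j with rfl | hkj <;> simp [*]

/-- The canonical map `ℓ¹(ι, ℓ¹(κ, E)) → ℓ¹(ι × κ, E)`. -/
noncomputable def lpOneUncurry (f : ℓ¹(ι, ℓ¹(κ, E))) : ℓ¹(ι × κ, E) :=
  ⟨fun p => f p.1 p.2, memℓp_one_iff_summable_norm.2 <|
    (summable_prod_of_nonneg fun _ => norm_nonneg _).2
      ⟨fun i => (lp_one_hasSum_norm (f i)).summable, by
        simpa only [(lp_one_hasSum_norm (f _)).tsum_eq] using (lp_one_hasSum_norm f).summable⟩⟩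

theorem isometry_lpOneUncurry : Isometry (lpOneUncurry : ℓ¹(ι, ℓ¹(κ, E)) → ℓ¹(ι × κ, E)) :=
  .of_dist_eq fun f g =>
    ((lp_one_hasSum_dist (lpOneUncurry f) (lpOneUncurry g)).prod_fiberwise
      fun i => lp_one_hasSum_dist (f i) (g i)).unique (lp_one_hasSum_dist f g)

/-- The map `ℓ¹(ι, E) → ℓ¹(κ, E)` relabelling the coordinates along `e : ι ↪ κ`, with zeros
outside the range of `e`. -/
noncomputable def lpOneExtend (e : ι ↪ κ) (f : ℓ¹(ι, E)) : ℓ¹(κ, E) :=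
  ⟨Function.extend e f 0, memℓp_one_iff_summable_norm.2 <| by
    simpa [Function.apply_extend, Function.comp_def, Pi.zero_def] using
      (hasSum_extend_zero e.injective).2 (lp_one_hasSum_norm f) |>.summable⟩

theorem isometry_lpOneExtend (e : ι ↪ κ) :
    Isometry (lpOneExtend e : ℓ¹(ι, E) → ℓ¹(κ, E)) := by
  refine .of_dist_eq fun f g => (lp_one_hasSum_dist _ _).unique ?_
  have dist_extend (k : κ) : dist (lpOneExtend e f k) (lpOneExtend e g k) =
      Function.extend e (fun i => dist (f i) (g i)) 0 k := by
    by_cases hk : ∃ i, e i = k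
    · obtain ⟨i, rfl⟩ := hk
      simp [lpOneExtend, e.injective.extend_apply]
    · simp [lpOneExtend, Function.extend_apply' _ _ _ hk]
  simpa only [dist_extend] using (hasSum_extend_zero e.injective).2 (lp_one_hasSum_dist f g)

theorem exists_isometry_lp_one_nat [Countable ι] : ∃ Φ : ℓ¹(ι, E) → ℓ¹(ℕ, E), Isometry Φ :=
  let ⟨e, he⟩ := exists_injective_nat ι
  ⟨lpOneExtend ⟨e, he⟩, isometry_lpOneExtend _⟩

theorem exists_isometry_lp_one_lp_one_nat :
    ∃ Φ : ℓ¹(ℕ, ℓ¹(ℕ, E)) → ℓ¹(ℕ, E), Isometry Φ :=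
  let ⟨Φ, hΦ⟩ := exists_isometry_lp_one_nat (ι := ℕ × ℕ) (E := E)
  ⟨Φ ∘ lpOneUncurry, hΦ.comp isometry_lpOneUncurry⟩

theorem prod_one_dist_eq_add {α β : Type*} [PseudoMetricSpace α] [PseudoMetricSpace β]
    (x y : WithLp 1 (α × β)) : dist x y = dist x.fst y.fst + dist x.snd y.snd := by
  simpa using WithLp.prod_dist_eq_add (p := 1) (by simp) x y

theorem exists_isometry_prod_lp_one_nat :
    ∃ Φ : WithLp 1 (ℓ¹(ℕ, E) × ℓ¹(ℕ, E)) → ℓ¹(ℕ, E), Isometry Φ := by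
  obtain ⟨Φ, hΦ⟩ := exists_isometry_lp_one_nat (ι := Bool × ℕ) (E := E)
  let pair (x : WithLp 1 (ℓ¹(ℕ, E) × ℓ¹(ℕ, E))) : ℓ¹(Bool, ℓ¹(ℕ, E)) :=
    ⟨fun b => cond b x.fst x.snd, .all _⟩
  have isometry_pair : Isometry pair := .of_dist_eq fun x y => by
    rw [prod_one_dist_eq_add, ← (lp_one_hasSum_dist (pair x) (pair y)).tsum_eq,
      tsum_bool, add_comm]
    rfl
  exact ⟨Φ ∘ lpOneUncurry ∘ pair, hΦ.comp (isometry_lpOneUncurry.comp isometry_pair)⟩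

theorem isCompact_setOf_forall_norm_le [∀ i, ProperSpace (F i)] {u : ι → ℝ} (hu : Summable u) :
    IsCompact {f : lp F 1 | ∀ i, ‖f i‖ ≤ u i} := by
  set K : Set (∀ i, F i) := Set.univ.pi fun i => Metric.closedBall 0 (u i)
  have norm_le (v : K) (i : ι) : ‖v.1 i‖ ≤ u i := mem_closedBall_zero_iff.1 (v.2 i trivial)
  let toLp (v : K) : lp F 1 :=
    ⟨v.1, memℓp_one_iff_summable_norm.2 (hu.of_nonneg_of_le (fun _ => norm_nonneg _) (norm_le v))⟩
  have dist_toLp (v w : K) : dist (toLp v) (toLp w) = ∑' i, dist (v.1 i) (w.1 i) :=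
    (lp_one_hasSum_dist (toLp v) (toLp w)).tsum_eq.symm
  have continuous_toLp : Continuous toLp := by
    refine continuous_iff_continuousAt.2 fun w => tendsto_iff_dist_tendsto_zero.2 ?_
    simp only [dist_toLp]
    rw [← tsum_zero (α := ℝ) (β := ι)]
    refine tendsto_tsum_of_dominated_convergence (hu.add hu) (fun i => ?_)
      (.of_forall fun v i => ?_)
    · have : Continuous fun v : K => v.1 i := (continuous_apply i).comp continuous_subtype_val
      exact tendsto_iff_dist_tendsto_zero.1 this.continuousAt
    · rw [Real.norm_of_nonneg dist_nonneg]
      exact (dist_le_norm_add_norm _ _).trans (add_le_add (norm_le v i) (norm_le w i))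
  have : CompactSpace K := isCompact_iff_compactSpace.1 <|
    isCompact_univ_pi fun i => isCompact_closedBall 0 (u i)
  convert isCompact_range continuous_toLp
  ext f
  refine ⟨fun hf => ⟨⟨f, fun i _ => mem_closedBall_zero_iff.2 (hf i)⟩, rfl⟩, ?_⟩
  rintro ⟨v, rfl⟩
  exact norm_le v

end LpOne

section Gluing

variable {ι A E : Type*} [MetricSpace A] [NormedAddCommGroup E]

theorem IsBilipschitzEmbedding.isometry_comp {Y Z : Type*} [MetricSpace Y] [MetricSpace Z]
    {C : ℝ} {f : A → Y} {Φ : Y → Z} (hf : IsBilipschitzEmbedding C f) (hΦ : Isometry Φ) :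
    IsBilipschitzEmbedding C (Φ ∘ f) := by
  simpa only [IsBilipschitzEmbedding, Function.comp_apply, hΦ.dist_eq] using hf

variable [NormedSpace ℝ E]

theorem IsBilipschitzEmbedding.exists_normalized_extension {C : ℝ} {S : Set A} {f : S → E}
    (hf : IsBilipschitzEmbedding C f) (hC : 0 ≤ C) {O : A} (hO : O ∈ S) :
    ∃ g : A → E, (∀ x, ‖g x‖ ≤ C * dist x O) ∧ ∀ x ∈ S, ∀ y ∈ S,
      dist x y ≤ dist (g x) (g y) ∧ dist (g x) (g y) ≤ C * dist x y := by
  obtain ⟨r, hr, hf⟩ := hf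
  let g : A → E := Function.extend Subtype.val (fun x => r⁻¹ • (f x - f ⟨O, hO⟩)) 0
  have g_apply (x : S) : g x = r⁻¹ • (f x - f ⟨O, hO⟩) :=
    Subtype.val_injective.extend_apply _ _ x
  have dist_g (x y : S) : dist (g x) (g y) = r⁻¹ * dist (f x) (f y) := by
    rw [g_apply, g_apply, dist_smul₀, dist_sub_right, Real.norm_of_nonneg (by positivity)]
  have g_bounds : ∀ x ∈ S, ∀ y ∈ S,
      dist x y ≤ dist (g x) (g y) ∧ dist (g x) (g y) ≤ C * dist x y := by
    intro x hx y hy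
    rw [dist_g ⟨x, hx⟩ ⟨y, hy⟩, inv_mul_eq_div, le_div_iff₀' hr, div_le_iff₀' hr, ← mul_assoc]
    exact hf ⟨x, hx⟩ ⟨y, hy⟩
  have g_base : g O = 0 := by rw [g_apply ⟨O, hO⟩, sub_self, smul_zero]
  refine ⟨g, fun x => ?_, g_bounds⟩
  by_cases hx : x ∈ S
  · rw [← dist_zero_right, ← g_base]
    exact (g_bounds x hx O hO).2
  · have : g x = 0 := Function.extend_apply' _ _ _ (by simpa using hx)
    rw [this, norm_zero]
    positivity

theorem abs_dist_smul_smul_sub_le (a : ℝ) {b : ℝ} (hb : 0 ≤ b) (u v : E) :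
    |dist (a • u) (b • v) - b * dist u v| ≤ |a - b| * ‖u‖ := by
  calc |dist (a • u) (b • v) - b * dist u v|
      = |dist (a • u) (b • v) - dist (b • u) (b • v)| := by
        rw [dist_smul₀ b, Real.norm_of_nonneg hb]
    _ ≤ dist (a • u) (b • u) := abs_dist_sub_le _ _ _
    _ = |a - b| * ‖u‖ := by rw [dist_eq_norm, ← sub_smul, norm_smul, Real.norm_eq_abs]

theorem lp_one_dist_mem_Icc_of_weighted {a b : ι → ℝ} {u v : ι → E} {X Y : ℓ¹(ι, E)}
    {d D R : ℝ} (hX : ∀ i, X i = a i • u i) (hY : ∀ i, Y i = b i • v i)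
    (ha : Summable a) (hb₀ : ∀ i, 0 ≤ b i) (hb : HasSum b 1) (hu : ∀ i, ‖u i‖ ≤ R)
    (huv : ∀ i, b i ≠ 0 → dist (u i) (v i) ∈ Set.Icc d D) :
    dist X Y ∈ Set.Icc (d - (∑' i, |a i - b i|) * R) (D + (∑' i, |a i - b i|) * R) := by
  have error_sum := (ha.sub hb.summable).abs.hasSum.mul_right R
  have dist_sum := lp_one_hasSum_dist X Y
  have term_error (i : ι) : |dist (X i) (Y i) - b i * dist (u i) (v i)| ≤ |a i - b i| * R := by
    rw [hX, hY]
    exact (abs_dist_smul_smul_sub_le _ (hb₀ i) _ _).trans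
      (mul_le_mul_of_nonneg_left (hu i) (abs_nonneg _))
  have term_bounds (i : ι) : b i * d ≤ b i * dist (u i) (v i) ∧
      b i * dist (u i) (v i) ≤ b i * D := by
    rcases eq_or_ne (b i) 0 with h0 | h0
    · simp [h0]
    · exact (huv i h0).imp (mul_le_mul_of_nonneg_left · (hb₀ i))
        (mul_le_mul_of_nonneg_left · (hb₀ i))
  constructor
  · simpa using hasSum_le (fun i => by linarith [abs_le.1 (term_error i), term_bounds i])
      ((hb.mul_right d).sub error_sum) dist_sum
  · simpa using hasSum_le (fun i => by linarith [abs_le.1 (term_error i), term_bounds i])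
      dist_sum ((hb.mul_right D).add error_sum)

theorem exists_lp_one_glue {φ : ι → A → ℝ} {f : ι → A → E} {O : A} {C η : ℝ}
    (φ_nonneg : ∀ i x, 0 ≤ φ i x) (φ_sum : ∀ x, HasSum (fun i => φ i x) 1)
    (φ_variation : ∀ x y, dist x O ≤ dist y O →
      (∑' i, |φ i x - φ i y|) * (C * dist x O) ≤ η * dist x y)
    (norm_f_le : ∀ i x, ‖f i x‖ ≤ C * dist x O)
    (f_bounds : ∀ i x y, dist x O ≤ dist y O → φ i y ≠ 0 →
      dist x y ≤ dist (f i x) (f i y) ∧ dist (f i x) (f i y) ≤ C * dist x y) :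
    ∃ F : A → ℓ¹(ι, E), ∀ x y,
      (1 - η) * dist x y ≤ dist (F x) (F y) ∧ dist (F x) (F y) ≤ (C + η) * dist x y := by
  have norm_term_le (x : A) (i : ι) : ‖φ i x • f i x‖ ≤ φ i x * (C * dist x O) := by
    rw [norm_smul, Real.norm_of_nonneg (φ_nonneg i x)]
    exact mul_le_mul_of_nonneg_left (norm_f_le i x) (φ_nonneg i x)
  let F (x : A) : ℓ¹(ι, E) := ⟨fun i => φ i x • f i x, memℓp_one_iff_summable_norm.2 <|
    ((φ_sum x).summable.mul_right _).of_nonneg_of_le (fun _ => norm_nonneg _) (norm_term_le x)⟩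
  refine ⟨F, fun x y => ?_⟩
  wlog hxy : dist x O ≤ dist y O generalizing x y
  · rw [dist_comm x y, dist_comm (F x)]
    exact this y x (le_of_not_ge hxy)
  have ⟨lower, upper⟩ := lp_one_dist_mem_Icc_of_weighted (X := F x) (Y := F y)
    (fun _ => rfl) (fun _ => rfl) (φ_sum x).summable (fun i => φ_nonneg i y) (φ_sum y)
    (fun i => norm_f_le i x) fun i => f_bounds i x y hxy
  constructor <;> linarith [φ_variation x y hxy]

end Gluing

section Tent

/-- The tent functions `a ↦ max (1 - |a - i|) 0`, a partition of unity on `[0, ∞)` indexed by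
`i : ℕ`. -/
noncomputable def tent (i : ℕ) (a : ℝ) : ℝ := max (1 - |a - i|) 0

theorem tent_nonneg (i : ℕ) (a : ℝ) : 0 ≤ tent i a := le_max_right _ _

theorem abs_sub_lt_one_of_tent_ne_zero {i : ℕ} {a : ℝ} (h : tent i a ≠ 0) : |a - i| < 1 := by
  by_contra! h1
  exact h (max_eq_right (by linarith))

theorem abs_tent_sub_tent_le (i : ℕ) (a b : ℝ) : |tent i a - tent i b| ≤ |a - b| :=
  calc |tent i a - tent i b| ≤ |(1 - |a - i|) - (1 - |b - i|)| := abs_max_sub_max_le_abs _ _ _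
    _ = |(|b - i| - |a - i|)| := by rw [sub_sub_sub_cancel_left]
    _ ≤ |(b - i) - (a - i)| := abs_abs_sub_abs_le _ _
    _ = |a - b| := by rw [sub_sub_sub_cancel_right, abs_sub_comm]

theorem tent_eq_zero_of_notMem {i : ℕ} {a : ℝ} (ha : 0 ≤ a)
    (hi : i ∉ ({⌊a⌋₊, ⌊a⌋₊ + 1} : Finset ℕ)) : tent i a = 0 := by
  contrapose! hi
  have ⟨h1, h2⟩ := abs_lt.1 (abs_sub_lt_one_of_tent_ne_zero hi)
  have hle : i ≤ ⌊a⌋₊ + 1 := by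
    have : (i : ℝ) < (⌊a⌋₊ + 2 : ℕ) := by push_cast; linarith [Nat.lt_floor_add_one a]
    exact Nat.lt_succ_iff.1 (mod_cast this)
  have hge : ⌊a⌋₊ ≤ i := by
    have : (⌊a⌋₊ : ℝ) < (i + 1 : ℕ) := by push_cast; linarith [Nat.floor_le ha]
    exact Nat.lt_succ_iff.1 (mod_cast this)
  simp only [Finset.mem_insert, Finset.mem_singleton]
  omega

theorem hasSum_tent {a : ℝ} (ha : 0 ≤ a) : HasSum (fun i => tent i a) 1 := by
  have floor_le := Nat.floor_le ha
  have lt_floor := Nat.lt_floor_add_one a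
  have sum_eq_one : ∑ i ∈ {⌊a⌋₊, ⌊a⌋₊ + 1}, tent i a = 1 := by
    rw [Finset.sum_pair (by omega), tent, tent, Nat.cast_succ, abs_of_nonneg (by linarith),
      abs_of_nonpos (by linarith), max_eq_left (by linarith), max_eq_left (by linarith)]
    ring
  exact sum_eq_one ▸ hasSum_sum_of_ne_finset_zero fun i hi => tent_eq_zero_of_notMem ha hi

theorem tsum_abs_tent_sub_tent_le {a b : ℝ} (ha : 0 ≤ a) (hb : 0 ≤ b) :
    ∑' i, |tent i a - tent i b| ≤ 4 * |a - b| := by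
  let T : Finset ℕ := {⌊a⌋₊, ⌊a⌋₊ + 1} ∪ {⌊b⌋₊, ⌊b⌋₊ + 1}
  have card_T : (T.card : ℝ) ≤ 4 :=
    mod_cast (Finset.card_union_le _ _).trans (add_le_add Finset.card_le_two Finset.card_le_two)
  calc ∑' i, |tent i a - tent i b| = ∑ i ∈ T, |tent i a - tent i b| := by
        refine tsum_eq_sum fun i hi => ?_
        rw [Finset.notMem_union] at hi
        simp [tent_eq_zero_of_notMem ha hi.1, tent_eq_zero_of_notMem hb hi.2]
    _ ≤ T.card • |a - b| := Finset.sum_le_card_nsmul _ _ _ fun i _ => abs_tent_sub_tent_le i a b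
    _ ≤ 4 * |a - b| := by
        rw [nsmul_eq_mul]
        exact mul_le_mul_of_nonneg_right card_T (abs_nonneg _)

end Tent

section LogScale

theorem mul_abs_log_one_add_sub_le {s t : ℝ} (hs : 0 ≤ s) (hst : s ≤ t) :
    s * |Real.log (1 + s) - Real.log (1 + t)| ≤ t - s := by
  have ht : 0 ≤ t := hs.trans hst
  have hlog : Real.log (1 + t) - Real.log (1 + s) ≤ (t - s) / (1 + s) :=
    calc Real.log (1 + t) - Real.log (1 + s) = Real.log ((1 + t) / (1 + s)) :=
          (Real.log_div (by linarith) (by linarith)).symm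
      _ ≤ (1 + t) / (1 + s) - 1 := Real.log_le_sub_one_of_pos (by positivity)
      _ = (t - s) / (1 + s) := by field_simp; ring
  have hmono : Real.log (1 + s) ≤ Real.log (1 + t) := Real.log_le_log (by linarith) (by linarith)
  rw [le_div_iff₀ (by positivity)] at hlog
  rw [abs_of_nonpos (by linarith)]
  linarith

variable {A : Type*} [PseudoMetricSpace A] {δ : ℝ}

/-- The height `δ log (1 + d(x, O))` of `x` above the base point `O`: it varies by at most a
`δ`-fraction of `d(x, y)` over `d(x, O)`. -/
noncomputable def logHeight (δ : ℝ) (O x : A) : ℝ :=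
  δ * Real.log (1 + dist x O)

theorem logHeight_nonneg (hδ : 0 ≤ δ) (O x : A) : 0 ≤ logHeight δ O x :=
  mul_nonneg hδ (Real.log_nonneg (by linarith [dist_nonneg (x := x) (y := O)]))

theorem dist_le_exp_of_logHeight_le (hδ : 0 < δ) {O x : A} {h : ℝ} (hx : logHeight δ O x ≤ h) :
    dist x O ≤ Real.exp (h / δ) := by
  have hlog : Real.log (1 + dist x O) ≤ h / δ := (le_div_iff₀' hδ).2 hx
  linarith [(Real.log_le_iff_le_exp (by positivity)).1 hlog]

theorem abs_logHeight_sub_mul_dist_le (hδ : 0 ≤ δ) {O x y : A} (hxy : dist x O ≤ dist y O) :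
    |logHeight δ O x - logHeight δ O y| * dist x O ≤ δ * dist x y :=
  calc |logHeight δ O x - logHeight δ O y| * dist x O
      = δ * (dist x O * |Real.log (1 + dist x O) - Real.log (1 + dist y O)|) := by
        rw [logHeight, logHeight, ← mul_sub, abs_mul, abs_of_nonneg hδ]
        ring
    _ ≤ δ * (dist y O - dist x O) :=
        mul_le_mul_of_nonneg_left (mul_abs_log_one_add_sub_le dist_nonneg hxy) hδ
    _ ≤ δ * dist x y := by
        refine mul_le_mul_of_nonneg_left ?_ hδ
        linarith [dist_triangle y x O, dist_comm x y]

end LogScale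

section BilipschitzExtension

variable {A E : Type*} [MetricSpace A] [NormedAddCommGroup E] [NormedSpace ℝ E] {C : ℝ}

theorem exists_lp_one_almost_of_closedBall (hC : 0 < C) (O : A)
    (hball : ∀ R, ∃ f : Metric.closedBall O R → E, IsBilipschitzEmbedding C f)
    {η : ℝ} (hη : 0 < η) :
    ∃ F : A → ℓ¹(ℕ, E), ∀ x y,
      (1 - η) * dist x y ≤ dist (F x) (F y) ∧ dist (F x) (F y) ≤ (C + η) * dist x y := by
  let δ : ℝ := η / (4 * C)
  have hδ : 0 < δ := by positivity
  let radius (i : ℕ) : ℝ := Real.exp ((i + 1) / δ)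
  have hf (i : ℕ) := (hball (radius i)).choose_spec.exists_normalized_extension hC.le
    (Metric.mem_closedBall_self (Real.exp_nonneg _))
  choose f norm_f_le f_bounds using hf
  refine exists_lp_one_glue (φ := fun i x => tent i (logHeight δ O x)) (O := O)
    (fun _ _ => tent_nonneg _ _) (fun x => hasSum_tent (logHeight_nonneg hδ.le O x))
    (fun x y hxy => ?_) norm_f_le fun i x y hxy hy => ?_
  · calc (∑' i, |tent i (logHeight δ O x) - tent i (logHeight δ O y)|) * (C * dist x O)
        ≤ 4 * |logHeight δ O x - logHeight δ O y| * (C * dist x O) :=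
          mul_le_mul_of_nonneg_right (tsum_abs_tent_sub_tent_le (logHeight_nonneg hδ.le O x)
            (logHeight_nonneg hδ.le O y)) (by positivity)
      _ = 4 * C * (|logHeight δ O x - logHeight δ O y| * dist x O) := by ring
      _ ≤ 4 * C * (δ * dist x y) :=
          mul_le_mul_of_nonneg_left (abs_logHeight_sub_mul_dist_le hδ.le hxy) (by positivity)
      _ = η * dist x y := by simp only [δ]; field_simp
  · have hyR : dist y O ≤ radius i := dist_le_exp_of_logHeight_le hδ <| by
      linarith [abs_lt.1 (abs_sub_lt_one_of_tent_ne_zero hy)]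
    exact f_bounds i x (hxy.trans hyR) y hyR

theorem exists_isBilipschitzEmbedding_lp_one_of_closedBall {ε : ℝ} (hε : 0 < ε) (hC : 1 ≤ C)
    (O : A) (hball : ∀ R, ∃ f : Metric.closedBall O R → E, IsBilipschitzEmbedding C f) :
    ∃ F : A → ℓ¹(ℕ, E), IsBilipschitzEmbedding ((1 + ε) * C) F := by
  let η : ℝ := ε / (2 + ε)
  have hη : 0 < η := by positivity
  have hη_eq : (1 - η) * (1 + ε) = 1 + η := by simp only [η]; field_simp; ring
  obtain ⟨F, hF⟩ := exists_lp_one_almost_of_closedBall (by linarith) O hball hη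
  refine ⟨F, 1 - η, by nlinarith, fun x y => ⟨(hF x y).1, (hF x y).2.trans ?_⟩⟩
  refine mul_le_mul_of_nonneg_right ?_ dist_nonneg
  calc C + η ≤ (1 + η) * C := by nlinarith
    _ = (1 - η) * ((1 + ε) * C) := by rw [← mul_assoc, hη_eq]

theorem MetricLocallyFinite.exists_isBilipschitzEmbedding_lp_one (hA : MetricLocallyFinite A)
    {ε : ℝ} (hε : 0 < ε) (hC : 1 ≤ C)
    (hfin : ∀ S : Set A, S.Finite → ∃ f : S → E, IsBilipschitzEmbedding C f) :
    ∃ F : A → ℓ¹(ℕ, E), IsBilipschitzEmbedding ((1 + ε) * C) F := by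
  rcases isEmpty_or_nonempty A with _ | ⟨⟨O⟩⟩
  · exact ⟨0, 1, one_pos, isEmptyElim⟩
  · exact exists_isBilipschitzEmbedding_lp_one_of_closedBall hε hC O fun R => hfin _ (hA O R)

end BilipschitzExtension

section MetricBetweenness

/-- Metric betweenness in the sense of Menger: `y` lies between `x` and `z` when the triangle
inequality through `y` is an equality. -/
def MetricBtw {X : Type*} [PseudoMetricSpace X] (x y z : X) : Prop :=
  dist x y + dist y z = dist x z

/-- Consecutive corners `a, b, b', a'` of a metric rectangle: each corner lies metrically between
its two neighbours. -/
structure MetricRectangle {X : Type*} [PseudoMetricSpace X] (a b b' a' : X) : Prop where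
  btw_a : MetricBtw a' a b
  btw_b : MetricBtw a b b'
  btw_b' : MetricBtw b b' a'
  btw_a' : MetricBtw b' a' a

theorem MetricRectangle.eq_or_eq {a b b' a' : ℝ} (h : MetricRectangle a b b' a') :
    (a = b ∧ a' = b') ∨ (a = a' ∧ b = b') := by
  obtain ⟨h1, h2, h3, h4⟩ := h
  simp only [MetricBtw, Real.dist_eq] at h1 h2 h3 h4
  grind [abs_cases]

theorem MetricBtw.lp_one_apply {ι : Type*} {F : ι → Type*} [∀ i, NormedAddCommGroup (F i)]
    {f g h : lp F 1} (hfgh : MetricBtw f g h) (i : ι) : MetricBtw (f i) (g i) (h i) := by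
  have slack_sum := ((lp_one_hasSum_dist f g).add (lp_one_hasSum_dist g h)).sub
    (lp_one_hasSum_dist f h)
  rw [hfgh, sub_self, hasSum_zero_iff_of_nonneg
    fun i => sub_nonneg.2 (dist_triangle (f i) (g i) (h i))] at slack_sum
  exact sub_eq_zero.1 (congrFun slack_sum i)

theorem MetricRectangle.lp_one_apply {ι : Type*} {F : ι → Type*} [∀ i, NormedAddCommGroup (F i)]
    {a b b' a' : lp F 1} (h : MetricRectangle a b b' a') (i : ι) :
    MetricRectangle (a i) (b i) (b' i) (a' i) :=
  ⟨h.btw_a.lp_one_apply i, h.btw_b.lp_one_apply i, h.btw_b'.lp_one_apply i, h.btw_a'.lp_one_apply i⟩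

theorem MetricRectangle.abs_sub_le {a b b' a' h : ℝ} (hR : MetricRectangle a b b' a')
    (hh : MetricBtw a' h b') : |h - a'| ≤ |b - a| := by
  simp only [MetricBtw, Real.dist_eq] at hh
  rcases hR.eq_or_eq with ⟨rfl, rfl⟩ | ⟨rfl, rfl⟩ <;> grind [abs_cases]

theorem MetricRectangle.dist_add_dist_sub {a b b₁ a₁ h₁ b₂ a₂ h₂ : ℝ}
    (hR₁ : MetricRectangle a b b₁ a₁) (hh₁ : MetricBtw a₁ h₁ b₁)
    (hR₂ : MetricRectangle a b b₂ a₂) (hh₂ : MetricBtw a₂ h₂ b₂) :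
    dist a₁ a₂ + dist (h₁ - a₁) (h₂ - a₂) = dist h₁ h₂ := by
  rcases eq_or_ne a b with rfl | hab
  · have hh₁ : h₁ - a₁ = 0 := by simpa using hR₁.abs_sub_le hh₁
    have hh₂ : h₂ - a₂ = 0 := by simpa using hR₂.abs_sub_le hh₂
    rw [sub_eq_zero.1 hh₁, sub_eq_zero.1 hh₂, sub_self, sub_self, dist_self, add_zero]
  · obtain rfl : a = a₁ := (hR₁.eq_or_eq.resolve_left fun h => hab h.1).1
    obtain rfl : a = a₂ := (hR₂.eq_or_eq.resolve_left fun h => hab h.1).1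
    rw [dist_self, zero_add, dist_sub_right]

theorem MetricRectangle.lp_one_dist_add_dist_sub {ι : Type*} {a b b₁ a₁ h₁ b₂ a₂ h₂ : ℓ¹(ι, ℝ)}
    (hR₁ : MetricRectangle a b b₁ a₁) (hh₁ : MetricBtw a₁ h₁ b₁)
    (hR₂ : MetricRectangle a b b₂ a₂) (hh₂ : MetricBtw a₂ h₂ b₂) :
    dist a₁ a₂ + dist (h₁ - a₁) (h₂ - a₂) = dist h₁ h₂ := by
  refine ((lp_one_hasSum_dist a₁ a₂).add (lp_one_hasSum_dist _ _)).unique ?_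
  convert lp_one_hasSum_dist h₁ h₂ using 2 with i
  exact (hR₁.lp_one_apply i).dist_add_dist_sub (hh₁.lp_one_apply i) (hR₂.lp_one_apply i)
    (hh₂.lp_one_apply i)

theorem finite_of_pairwise_le_dist {ι X : Type*} [MetricSpace X] {K : Set X} (hK : IsCompact K)
    {u : ι → X} (hu : ∀ i, u i ∈ K) {r : ℝ} (hr : 0 < r)
    (hsep : Pairwise fun i j => r ≤ dist (u i) (u j)) : Finite ι := by
  let _ : TopologicalSpace ι := ⊥
  have : DiscreteTopology ι := ⟨rfl⟩
  have hpre := (Metric.isClosedEmbedding_of_pairwise_le_dist hr hsep).isCompact_preimage hK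
  rw [Set.preimage_eq_univ_iff.2 (Set.range_subset_iff.2 hu)] at hpre
  exact Set.finite_univ_iff.1 (isCompact_iff_finite.1 hpre)

theorem finite_of_metricRectangle_lp_one {ι κ : Type*} {a b : ℓ¹(ι, ℝ)} {a' b' h : κ → ℓ¹(ι, ℝ)}
    (hR : ∀ n, MetricRectangle a b (b' n) (a' n)) (hh : ∀ n, MetricBtw (a' n) (h n) (b' n))
    {r : ℝ} (hr : 0 < r)
    (hsep : Pairwise fun m n => dist (a' m) (a' n) + r ≤ dist (h m) (h n)) : Finite κ := by
  refine finite_of_pairwise_le_dist (u := fun n => h n - a' n)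
    (isCompact_setOf_forall_norm_le (lp_one_hasSum_norm (b - a)).summable)
    (fun n i => ((hR n).lp_one_apply i).abs_sub_le ((hh n).lp_one_apply i)) hr fun m n hmn => ?_
  linarith [hsep hmn, (hR m).lp_one_dist_add_dist_sub (hh m) (hR n) (hh n)]

end MetricBetweenness

section Coin

/-- Boolean random variables: the two constants and independent fair coin flips indexed by `ι`,
metrized by the probability of disagreement. -/
inductive Coin (ι : Type*)
  | const (b : Bool)
  | flip (i : ι)

namespace Coin

variable {ι : Type*}

open Classical in
noncomputable instance : Dist (Coin ι) where
  dist
    | const b, const c => if b = c then 0 else 1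
    | flip i, flip j => if i = j then 0 else 1 / 2
    | _, _ => 1 / 2

theorem dist_const_of_ne {b c : Bool} (h : b ≠ c) : dist (const b : Coin ι) (const c) = 1 :=
  if_neg h

theorem dist_flip_of_ne {i : ι} {p : Coin ι} (h : p ≠ flip i) : dist (flip i) p = 1 / 2 := by
  cases p with
  | const b => rfl
  | flip j => exact if_neg fun hij => h (congrArg flip hij.symm)

noncomputable instance : MetricSpace (Coin ι) :=
  have dist_self (p : Coin ι) : dist p p = 0 := by cases p <;> exact if_pos rfl
  have dist_comm (p q : Coin ι) : dist p q = dist q p := by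
    cases p <;> cases q <;> simp only [dist] <;> congr 1 <;> exact propext eq_comm
  have half_le_dist {p q : Coin ι} (h : p ≠ q) : 1 / 2 ≤ dist p q := by
    rcases p with b | i
    · rcases q with c | j
      · rw [dist_const_of_ne (by rintro rfl; exact h rfl)]
        norm_num
      · rw [dist_comm, dist_flip_of_ne h]
    · rw [dist_flip_of_ne h.symm]
  have dist_le_one (p q : Coin ι) : dist p q ≤ 1 := by
    cases p <;> cases q <;> simp only [dist] <;> (try split_ifs) <;> norm_num
  { dist_self
    dist_comm
    dist_triangle p q r := by
      rcases eq_or_ne p q with rfl | hpq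
      · rw [dist_self, zero_add]
      rcases eq_or_ne q r with rfl | hqr
      · rw [dist_self, add_zero]
      linarith [dist_le_one p r, half_le_dist hpq, half_le_dist hqr]
    eq_of_dist_eq_zero {p q} h := by
      by_contra hpq
      linarith [half_le_dist hpq] }

/-- The set of flips on which a coin depends. -/
def support : Coin ι → Finset ι
  | const _ => ∅
  | flip i => {i}

theorem finite_setOf_support_subset (s : Finset ι) : {p : Coin ι | p.support ⊆ s}.Finite := by
  refine ((Set.finite_range const).union (s.finite_toSet.image flip)).subset ?_
  rintro (b | i) hp
  · exact .inl ⟨b, rfl⟩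
  · exact .inr ⟨i, Finset.singleton_subset_iff.1 hp, rfl⟩

open Classical in
/-- The value of a coin when `T` is the set of flips that came up heads. -/
noncomputable def outcome (T : Finset ι) : Coin ι → Bool
  | const b => b
  | flip i => i ∈ T

open Classical in
theorem two_mul_card_outcome_flip_ne {s : Finset ι} {i : ι} (hi : i ∈ s) {p : Coin ι}
    (hp : p ≠ flip i) :
    2 * (s.powerset.filter fun T => outcome T (flip i) ≠ outcome T p).card = 2 ^ s.card := by
  let toggle (T : Finset ι) : Finset ι := symmDiff T {i}
  have toggle_toggle (T : Finset ι) : toggle (toggle T) = T := symmDiff_symmDiff_cancel_right _ _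
  have toggle_mem {T : Finset ι} (hT : T ∈ s.powerset) : toggle T ∈ s.powerset :=
    Finset.mem_powerset.2 fun j hj => by
      rcases Finset.mem_symmDiff.1 hj with h | h
      · exact Finset.mem_powerset.1 hT h.1
      · exact Finset.mem_singleton.1 h.1 ▸ hi
  have outcome_toggle_flip (T : Finset ι) : outcome (toggle T) (flip i) = !outcome T (flip i) := by
    simp [outcome, toggle, Finset.mem_symmDiff]
  have outcome_toggle (T : Finset ι) : outcome (toggle T) p = outcome T p := by
    cases p with
    | const b => rfl
    | flip j =>
      have hji : j ≠ i := fun h => hp (congrArg flip h)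
      simp [outcome, toggle, Finset.mem_symmDiff, hji]
  have card_eq : (s.powerset.filter fun T => outcome T (flip i) ≠ outcome T p).card =
      (s.powerset.filter fun T => ¬ outcome T (flip i) ≠ outcome T p).card := by
    refine Finset.card_nbij' toggle toggle (fun T hT => ?_) (fun T hT => ?_)
      (fun T _ => toggle_toggle T) (fun T _ => toggle_toggle T) <;>
    · simp only [Finset.coe_filter, Set.mem_ofPred_eq] at hT ⊢
      refine ⟨toggle_mem hT.1, ?_⟩
      have := hT.2
      rw [outcome_toggle_flip, outcome_toggle]
      grind
  rw [two_mul]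
  nth_rw 2 [card_eq]
  rw [Finset.card_filter_add_card_filter_not, Finset.card_powerset]

open Classical in
theorem card_outcome_ne {s : Finset ι} {p q : Coin ι} (hp : p.support ⊆ s) (hq : q.support ⊆ s) :
    ((s.powerset.filter fun T => outcome T p ≠ outcome T q).card : ℝ) = 2 ^ s.card * dist p q := by
  have card_flip {i : ι} (hi : (flip i).support ⊆ s) {p : Coin ι} (hp : p ≠ flip i) :
      ((s.powerset.filter fun T => outcome T (flip i) ≠ outcome T p).card : ℝ) =
        2 ^ s.card * dist (flip i) p := by
    have := two_mul_card_outcome_flip_ne (Finset.singleton_subset_iff.1 hi) hp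
    rw [dist_flip_of_ne hp, ← @Nat.cast_ofNat ℝ, ← Nat.cast_pow, ← this]
    push_cast
    ring
  rcases eq_or_ne p q with rfl | hpq
  · simp
  rcases p with b | i
  · rcases q with c | j
    · have hbc : b ≠ c := fun h => hpq (congrArg const h)
      simp [outcome, hbc, dist_const_of_ne hbc]
    · simpa only [dist_comm, ne_comm] using card_flip hq hpq
  · exact card_flip hp hpq.symm

/-- A coin as the vector of its values over all outcomes of the flips in `s`, weighted by their
probability. -/
noncomputable def toLpOne (s : Finset ι) (p : Coin ι) : ℓ¹(s.powerset, ℝ) :=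
  ⟨fun T => (1 / 2) ^ s.card * (outcome T.1 p).toNat, .all _⟩

theorem dist_toLpOne {s : Finset ι} {p q : Coin ι} (hp : p.support ⊆ s) (hq : q.support ⊆ s) :
    dist (toLpOne s p) (toLpOne s q) = dist p q := by
  classical
  have dist_toNat (b c : Bool) : dist (b.toNat : ℝ) c.toNat = if b ≠ c then 1 else 0 := by
    cases b <;> cases c <;> simp
  have dist_apply (T : s.powerset) : dist (toLpOne s p T) (toLpOne s q T) =
      (1 / 2) ^ s.card * if outcome T.1 p ≠ outcome T.1 q then 1 else 0 := by
    change dist ((1 / 2 : ℝ) ^ s.card * _) ((1 / 2 : ℝ) ^ s.card * _) = _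
    rw [← smul_eq_mul, ← smul_eq_mul, dist_smul₀, Real.norm_of_nonneg (by positivity), dist_toNat]
  rw [← (lp_one_hasSum_dist _ _).tsum_eq, tsum_fintype]
  simp only [dist_apply]
  rw [← Finset.mul_sum, Finset.sum_coe_sort s.powerset fun T =>
    if outcome T p ≠ outcome T q then (1 : ℝ) else 0, Finset.sum_boole, card_outcome_ne hp hq,
    ← mul_assoc, ← mul_pow]
  norm_num

end Coin

end Coin

section Spokes

open Coin

variable {ι : Type*}

theorem exists_lp_one_isometric_on_finite {S : Set (WithLp 1 (Coin ι × ℓ¹(ℕ, ℝ)))}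
    (hS : S.Finite) :
    ∃ f : WithLp 1 (Coin ι × ℓ¹(ℕ, ℝ)) → ℓ¹(ℕ, ℝ),
      ∀ x ∈ S, ∀ y ∈ S, dist (f x) (f y) = dist x y := by
  classical
  let s : Finset ι := hS.toFinset.biUnion fun x => x.fst.support
  have support_subset {x} (hx : x ∈ S) : x.fst.support ⊆ s :=
    Finset.subset_biUnion_of_mem (fun x : WithLp 1 (Coin ι × ℓ¹(ℕ, ℝ)) => x.fst.support)
      (hS.mem_toFinset.2 hx)
  obtain ⟨Φ, hΦ⟩ := exists_isometry_lp_one_nat (ι := s.powerset) (E := ℝ)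
  obtain ⟨Ψ, hΨ⟩ := exists_isometry_prod_lp_one_nat (E := ℝ)
  refine ⟨fun x => Ψ (WithLp.toLp 1 (Φ (x.fst.toLpOne s), x.snd)), fun x hx y hy => ?_⟩
  rw [hΨ.dist_eq, prod_one_dist_eq_add, prod_one_dist_eq_add x]
  exact congrArg (· + _) <| (hΦ.dist_eq _ _).trans <|
    dist_toLpOne (support_subset hx) (support_subset hy)

/-- The copy of the coin `p` at height `n` on the `n`-th of countably many spokes `[0, ∞)` glued
at `0`, the spokes being realized as the coordinate half-lines of `ℓ¹`. -/
noncomputable def onSpoke (n : ℕ) (p : Coin ℕ) : WithLp 1 (Coin ℕ × ℓ¹(ℕ, ℝ)) :=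
  WithLp.toLp 1 (p, lp.single 1 n (n : ℝ))

theorem dist_onSpoke (m n : ℕ) (p q : Coin ℕ) :
    dist (onSpoke m p) (onSpoke n q) = dist p q + if m = n then 0 else (m + n : ℝ) := by
  rw [prod_one_dist_eq_add]
  split_ifs with h
  · simp [onSpoke, h]
  · simp [onSpoke, lp_one_dist_single_single h]

/-- The spokes with two constant coins at each height `n` and, in between, the `n`-th flip. -/
def coinSpokes : Set (WithLp 1 (Coin ℕ × ℓ¹(ℕ, ℝ))) :=
  ⋃ n, onSpoke n '' {p | p.support ⊆ {n}}

theorem norm_snd_onSpoke (n : ℕ) (p : Coin ℕ) : ‖(onSpoke n p).snd‖ = n := by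
  simp [onSpoke]

theorem metricLocallyFinite_coinSpokes : MetricLocallyFinite coinSpokes := by
  intro x R
  have finite_low := (Set.finite_Iic ⌊‖x.1.snd‖ + R⌋₊).biUnion fun n _ =>
    (finite_setOf_support_subset {n}).image (onSpoke n)
  refine .of_finite_image (f := Subtype.val) (finite_low.subset ?_) Subtype.val_injective.injOn
  rintro _ ⟨⟨y, hy⟩, hyx, rfl⟩
  obtain ⟨n, p, hp, rfl⟩ := Set.mem_iUnion.1 hy
  refine Set.mem_biUnion (Set.mem_Iic.2 <| Nat.le_floor ?_) ⟨p, hp, rfl⟩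
  have dist_le : dist (onSpoke n p) x.1 ≤ R := hyx
  rw [prod_one_dist_eq_add] at dist_le
  rw [← norm_snd_onSpoke n p]
  linarith [dist_nonneg (x := (onSpoke n p).fst) (y := x.1.fst),
    norm_le_norm_add_norm_sub x.1.snd (onSpoke n p).snd,
    dist_eq_norm_sub' (onSpoke n p).snd x.1.snd]

theorem exists_metricRectangle_of_isometry_coinSpokes {X : Type*} [PseudoMetricSpace X]
    {f : coinSpokes → X} (hf : Isometry f) :
    ∃ (a b : X) (a' b' h : ℕ → X), (∀ n, MetricRectangle a b (b' n) (a' n)) ∧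
      (∀ n, MetricBtw (a' n) (h n) (b' n)) ∧
      Pairwise fun m n => dist (a' m) (a' n) + 1 / 2 ≤ dist (h m) (h n) := by
  have support_const (n : ℕ) (b : Bool) : (const b).support ⊆ {n} := Finset.empty_subset _
  have support_flip (n : ℕ) : (flip n).support ⊆ {n} := Finset.Subset.rfl
  let point (n : ℕ) (p : Coin ℕ) (hp : p.support ⊆ {n}) : X :=
    f ⟨onSpoke n p, Set.mem_iUnion.2 ⟨n, p, hp, rfl⟩⟩
  have dist_point (m n : ℕ) (p q : Coin ℕ) (hp hq) :
      dist (point m p hp) (point n q hq) = dist p q + if m = n then 0 else (m + n : ℝ) :=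
    (hf.dist_eq _ _).trans (dist_onSpoke m n p q)
  let constAt (b : Bool) (n : ℕ) : X := point n (const b) (support_const n b)
  let flipAt (n : ℕ) : X := point n (flip n) (support_flip n)
  refine ⟨constAt false 0, constAt true 0, fun n => constAt false (n + 1),
    fun n => constAt true (n + 1), fun n => flipAt (n + 1), fun n => ?_, fun n => ?_,
    fun m n hmn => ?_⟩
  · constructor <;> simp [MetricBtw, constAt, dist_point, dist_const_of_ne, add_comm, add_left_comm]
  · rw [MetricBtw, dist_comm (constAt _ _)]
    simp [constAt, flipAt, dist_point, dist_const_of_ne, dist_flip_of_ne, -one_div, add_halves]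
  · refine ge_of_eq ?_
    simp [constAt, flipAt, dist_point, dist_flip_of_ne, hmn, hmn.symm, add_comm]

theorem not_exists_isometry_coinSpokes_lp_one :
    ¬ ∃ f : coinSpokes → ℓ¹(ι, ℝ), Isometry f := by
  rintro ⟨f, hf⟩
  obtain ⟨a, b, a', b', h, rectangle, between, separated⟩ :=
    exists_metricRectangle_of_isometry_coinSpokes hf
  have := finite_of_metricRectangle_lp_one rectangle between one_half_pos separated
  exact not_finite ℕ

end Spokes

theorem ell1_D_eq_one_plus :
    (∀ (ε C : ℝ), 0 < ε → 1 ≤ C →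
      ∀ (A : Type*) [MetricSpace A], MetricLocallyFinite A →
        (∀ S : Set A, S.Finite →
          ∃ f : S → lp (fun _ : ℕ => ℝ) 1, IsBilipschitzEmbedding C f) →
        ∃ f : A → lp (fun _ : ℕ => ℝ) 1, IsBilipschitzEmbedding ((1 + ε) * C) f) ∧
    (∃ (M : Type) (_ : MetricSpace M), MetricLocallyFinite M ∧
      (∀ S : Set M, S.Finite → ∃ f : S → lp (fun _ : ℕ => ℝ) 1, Isometry f) ∧
      ¬ ∃ f : M → lp (fun _ : ℕ => ℝ) 1, Isometry f) := by
  refine ⟨fun ε C hε hC A _ hA hfin => ?_, coinSpokes, inferInstance,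
    metricLocallyFinite_coinSpokes, fun S hS => ?_, not_exists_isometry_coinSpokes_lp_one⟩
  · obtain ⟨F, hF⟩ := hA.exists_isBilipschitzEmbedding_lp_one hε hC hfin
    obtain ⟨Φ, hΦ⟩ := exists_isometry_lp_one_lp_one_nat (E := ℝ)
    exact ⟨Φ ∘ F, hF.isometry_comp hΦ⟩
  · obtain ⟨f, hf⟩ := exists_lp_one_isometric_on_finite (hS.image Subtype.val)
    exact ⟨fun x => f x.1, .of_dist_eq fun x y =>
      hf _ (Set.mem_image_of_mem _ x.2) _ (Set.mem_image_of_mem _ y.2)⟩
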